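/- arXiv:2512.14617 — 4 statements merged into one kernel-verified Lean document; each statement's English description precedes it below -/
import Mathlib

section
/- Let k ≥ 2 and m ≥ 1 be natural numbers, let p be a probability mass function on Fin k (p j ≥ 0 and ∑_j p j = 1), let (Ω, μ) be a probability space, and let Y : Fin m → Ω → Fin k be independent identically distributed random variables each with law p (i.e., μ {ω : Y i ω = j} = p j for all i, j). For ω ∈ Ω define the empirical distribution p̂_ω(j) = (1/m) · |{ i : Y i ω = j }|. Then for every ε > 0, μ { ω : ∑_{j < k} |p̂_ω(j) − p j| > ε } ≤ (2^k − 2) · exp(−m ε² / 2). -/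
open MeasureTheory ProbabilityTheory

lemma weissman_det {k : ℕ} (d : Fin k → ℝ) (hd : ∑ j, d j = 0) (ε : ℝ) (hε : 0 < ε)
    (h : ε < ∑ j, |d j|) :
    ∃ A : Finset (Fin k), A ≠ ∅ ∧ A ≠ Finset.univ ∧ ε / 2 ≤ ∑ j ∈ A, d j := by
  have key : ∑ j, |d j| = 2 * ∑ j ∈ Finset.univ.filter (fun j => 0 < d j), d j := by
    rw [Finset.sum_filter, Finset.mul_sum]
    have : ∑ j, |d j| = ∑ j, |d j| + ∑ j, d j := by rw [hd, add_zero]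
    rw [this, ← Finset.sum_add_distrib]
    refine Finset.sum_congr rfl fun j _ => ?_
    split_ifs with hj
    · rw [abs_of_pos hj]; ring
    · rw [abs_of_nonpos (not_lt.mp hj)]; ring
  refine ⟨Finset.univ.filter (fun j => 0 < d j), ?_, ?_, by linarith⟩
  · intro h0
    rw [h0] at key
    simp only [Finset.sum_empty] at key
    linarith
  · intro h0
    rw [h0, hd] at key
    linarith

lemma weissman_integral {k : ℕ} (p : Fin k → ℝ) (hp_nonneg : ∀ j, 0 ≤ p j)
    {Ω : Type*} [MeasurableSpace Ω] (μ : Measure Ω) [IsProbabilityMeasure μ]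
    (Y : Ω → Fin k) (hmeas : Measurable Y)
    (hlaw : ∀ j, μ {ω | Y ω = j} = ENNReal.ofReal (p j)) (A : Finset (Fin k)) :
    ∫ ω, (if Y ω ∈ A then (1 : ℝ) else 0) ∂μ = ∑ j ∈ A, p j := by
  have hms : ∀ j, MeasurableSet {ω | Y ω = j} := fun j => hmeas (measurableSet_singleton j)
  have h1 : ∀ ω, (if Y ω ∈ A then (1 : ℝ) else 0)
      = ∑ j ∈ A, Set.indicator {ω | Y ω = j} (1 : Ω → ℝ) ω := by
    intro ω
    simp [Set.indicator_apply]
  simp_rw [h1]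
  rw [integral_finsetSum]
  · refine Finset.sum_congr rfl fun j _ => ?_
    rw [integral_indicator_one (hms j), Measure.real, hlaw, ENNReal.toReal_ofReal (hp_nonneg j)]
  · intro j _
    exact (integrable_const (1 : ℝ)).indicator (hms j)

lemma weissman_hoeffding {k m : ℕ} (hm : 1 ≤ m)
    (p : Fin k → ℝ) (hp_nonneg : ∀ j, 0 ≤ p j)
    {Ω : Type*} [MeasurableSpace Ω] (μ : Measure Ω) [IsProbabilityMeasure μ]
    (Y : Fin m → Ω → Fin k) (hmeas : ∀ i, Measurable (Y i))
    (hindep : iIndepFun Y μ)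
    (hlaw : ∀ i j, μ {ω | Y i ω = j} = ENNReal.ofReal (p j)) (A : Finset (Fin k))
    (ε : ℝ) (hε : 0 < ε) :
    μ {ω | (m : ℝ) * (ε / 2) ≤ ∑ i, ((if Y i ω ∈ A then (1 : ℝ) else 0) - ∑ j ∈ A, p j)} ≤
      ENNReal.ofReal (Real.exp (-(m : ℝ) * ε ^ 2 / 2)) := by
  have hf : Measurable (fun x : Fin k => if x ∈ A then (1 : ℝ) else 0) := measurable_of_finite _
  have hg : Measurable (fun x : Fin k => (if x ∈ A then (1 : ℝ) else 0) - ∑ j ∈ A, p j) :=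
    measurable_of_finite _
  have hsub : ∀ i ∈ (Finset.univ : Finset (Fin m)), HasSubgaussianMGF
      (fun ω => (if Y i ω ∈ A then (1 : ℝ) else 0) - ∑ j ∈ A, p j)
      ((‖(1 : ℝ) - 0‖₊ / 2) ^ 2) μ := by
    intro i _
    have := hasSubgaussianMGF_of_mem_Icc (μ := μ) (a := 0) (b := 1)
      (X := fun ω => if Y i ω ∈ A then (1 : ℝ) else 0) (hf.comp (hmeas i)).aemeasurable
      (Filter.Eventually.of_forall fun ω => by
        show (if Y i ω ∈ A then (1 : ℝ) else 0) ∈ Set.Icc (0 : ℝ) 1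
        split_ifs <;> simp)
    rwa [weissman_integral p hp_nonneg μ (Y i) (hmeas i) (hlaw i) A] at this
  have hi : iIndepFun (fun i ω => (if Y i ω ∈ A then (1 : ℝ) else 0) - ∑ j ∈ A, p j) μ :=
    hindep.comp (fun _ x => (if x ∈ A then (1 : ℝ) else 0) - ∑ j ∈ A, p j) (fun _ => hg)
  have h := HasSubgaussianMGF.measure_sum_ge_le_of_iIndepFun hi
    (c := fun _ => (‖(1 : ℝ) - 0‖₊ / 2) ^ 2) hsub
    (ε := (m : ℝ) * (ε / 2)) (by positivity)
  rw [← ofReal_measureReal]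
  refine ENNReal.ofReal_le_ofReal (h.trans (le_of_eq ?_))
  congr 1
  have hm' : (m : ℝ) ≠ 0 := by positivity
  simp
  field_simp
  try norm_num


/-- Weissman's ℓ₁ concentration inequality: for `m` i.i.d. samples from a
distribution `p` on an alphabet of size `k`, the ℓ₁ distance between the
empirical distribution and `p` exceeds `ε` with probability at most
`(2^k − 2) exp(−m ε² / 2)`. -/
theorem weissman_l1_concentration
    (k m : ℕ) (hk : 2 ≤ k) (hm : 1 ≤ m)
    (p : Fin k → ℝ) (hp_nonneg : ∀ j, 0 ≤ p j) (hp_sum : ∑ j, p j = 1)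
    {Ω : Type*} [MeasurableSpace Ω] (μ : Measure Ω) [IsProbabilityMeasure μ]
    (Y : Fin m → Ω → Fin k) (hmeas : ∀ i, Measurable (Y i))
    (hindep : iIndepFun Y μ)
    (hlaw : ∀ i j, μ {ω | Y i ω = j} = ENNReal.ofReal (p j)) :
    ∀ ε : ℝ, 0 < ε →
      μ {ω | ∑ j : Fin k,
          |(1 / (m : ℝ)) *
              ((Finset.univ.filter (fun i : Fin m => Y i ω = j)).card : ℝ) -
            p j| > ε} ≤
        ENNReal.ofReal ((2 ^ k - 2) * Real.exp (-(m : ℝ) * ε ^ 2 / 2)) := by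
  intro ε hε
  have hm' : (m : ℝ) ≠ 0 := by positivity
  set T : Finset (Finset (Fin k)) := (Finset.univ.erase ∅).erase Finset.univ with hT
  have hcard : (T.card : ℝ) = 2 ^ k - 2 := by
    have hne : (Finset.univ : Finset (Fin k)) ≠ ∅ := by
      intro h0
      have := congrArg Finset.card h0
      simp at this
      omega
    have h4 : 2 ≤ 2 ^ k := by
      calc 2 = 2 ^ 1 := by norm_num
        _ ≤ 2 ^ k := Nat.pow_le_pow_right (by norm_num) (by omega)
    have : T.card = 2 ^ k - 2 := by
      rw [hT, Finset.card_erase_of_mem (by simp [hne]), Finset.card_erase_of_mem (by simp)]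
      simp
      omega
    rw [this, Nat.cast_sub h4]
    simp
  calc _ ≤ μ (⋃ A ∈ T, {ω | (m : ℝ) * (ε / 2) ≤
          ∑ i, ((if Y i ω ∈ A then (1 : ℝ) else 0) - ∑ j ∈ A, p j)}) := by
        refine measure_mono fun ω hω => ?_
        have hω' : ε < _ := hω
        have hz : ∑ j : Fin k, ((1 / (m : ℝ)) *
            ((Finset.univ.filter (fun i : Fin m => Y i ω = j)).card : ℝ) - p j) = 0 := by
          rw [Finset.sum_sub_distrib, hp_sum, ← Finset.mul_sum]
          simp_rw [Finset.card_filter]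
          push_cast
          rw [Finset.sum_comm]
          simp [hm']
        obtain ⟨A, hA1, hA2, hA⟩ := weissman_det _ hz ε hε hω'
        · simp only [Set.mem_iUnion]
          refine ⟨A, by simp [hT, hA1, hA2], ?_⟩
          rw [Set.mem_ofPred_eq]
          refine (mul_le_mul_of_nonneg_left hA (Nat.cast_nonneg m)).trans (le_of_eq ?_)
          rw [Finset.sum_sub_distrib, Finset.sum_sub_distrib, mul_sub, ← Finset.mul_sum,
            ← mul_assoc, mul_one_div_cancel hm', one_mul]
          congr 1
          · simp_rw [Finset.card_filter]
            push_cast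
            rw [Finset.sum_comm]
            simp
          · simp
    _ ≤ ∑ A ∈ T, μ {ω | (m : ℝ) * (ε / 2) ≤
          ∑ i, ((if Y i ω ∈ A then (1 : ℝ) else 0) - ∑ j ∈ A, p j)} :=
        measure_biUnion_finset_le _ _
    _ ≤ ∑ A ∈ T, ENNReal.ofReal (Real.exp (-(m : ℝ) * ε ^ 2 / 2)) :=
        Finset.sum_le_sum fun A _ =>
          weissman_hoeffding hm p hp_nonneg μ Y hmeas hindep hlaw A ε hε
    _ = _ := by
        rw [Finset.sum_const, ← hcard, nsmul_eq_mul, ENNReal.ofReal_mul (Nat.cast_nonneg _),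
          ENNReal.ofReal_natCast]
end

section
/- Let S be a finite nonempty type, γ ∈ [0, 1), R > 0, and β ≥ 0 real numbers. Let p₁, p₂ : S → S → ℝ be stochastic kernels (pᵢ s s' ≥ 0 and ∑_{s'} pᵢ s s' = 1 for all s) and ρ₁, ρ₂ : S → ℝ reward functions with |ρ₁ s − ρ₂ s| ≤ β for all s and ∑_{s'} |p₁ s s' − p₂ s s'| ≤ β / R for all s. Suppose V₁, V₂ : S → ℝ satisfy the Bellman evaluation equations Vᵢ(s) = ρᵢ(s) + γ · ∑_{s'} pᵢ s s' · Vᵢ(s') for all s, and that |V₂ s| ≤ R / (1 − γ) for all s. Then for every s ∈ S, |V₁(s) − V₂(s)| ≤ (β + γ β / (1 − γ)) / (1 − γ). -/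
/-- Simulation lemma: value functions of a fixed policy in two Markov reward
processes with `(β, β/R)`-close rewards and transition rows are close. -/
theorem simulation_lemma
    {S : Type*} [Fintype S] [Nonempty S]
    (γ R β : ℝ) (hγ0 : 0 ≤ γ) (hγ1 : γ < 1) (hR : 0 < R) (hβ : 0 ≤ β)
    (p₁ p₂ : S → S → ℝ) (ρ₁ ρ₂ : S → ℝ)
    (hp₁_nonneg : ∀ s s', 0 ≤ p₁ s s') (hp₁_sum : ∀ s, ∑ s' : S, p₁ s s' = 1)
    (hp₂_nonneg : ∀ s s', 0 ≤ p₂ s s') (hp₂_sum : ∀ s, ∑ s' : S, p₂ s s' = 1)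
    (hρ : ∀ s, |ρ₁ s - ρ₂ s| ≤ β)
    (hp : ∀ s, ∑ s' : S, |p₁ s s' - p₂ s s'| ≤ β / R)
    (V₁ V₂ : S → ℝ)
    (hV₁ : ∀ s, V₁ s = ρ₁ s + γ * ∑ s' : S, p₁ s s' * V₁ s')
    (hV₂ : ∀ s, V₂ s = ρ₂ s + γ * ∑ s' : S, p₂ s s' * V₂ s')
    (hV₂_bound : ∀ s, |V₂ s| ≤ R / (1 - γ)) :
    ∀ s : S, |V₁ s - V₂ s| ≤ (β + γ * β / (1 - γ)) / (1 - γ) := by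
  have h1 : 0 < 1 - γ := by linarith
  obtain ⟨m, hm⟩ := Finite.exists_max (fun s => |V₁ s - V₂ s|)
  have hA : |∑ s' : S, p₁ m s' * (V₁ s' - V₂ s')| ≤ |V₁ m - V₂ m| := by
    calc |∑ s' : S, p₁ m s' * (V₁ s' - V₂ s')|
        ≤ ∑ s' : S, |p₁ m s' * (V₁ s' - V₂ s')| := Finset.abs_sum_le_sum_abs _ _
      _ ≤ ∑ s' : S, p₁ m s' * |V₁ m - V₂ m| := by
          refine Finset.sum_le_sum fun i _ => ?_
          rw [abs_mul, abs_of_nonneg (hp₁_nonneg m i)]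
          exact mul_le_mul_of_nonneg_left (hm i) (hp₁_nonneg m i)
      _ = |V₁ m - V₂ m| := by rw [← Finset.sum_mul, hp₁_sum, one_mul]
  have hB : |∑ s' : S, (p₁ m s' - p₂ m s') * V₂ s'| ≤ β / (1 - γ) := by
    calc |∑ s' : S, (p₁ m s' - p₂ m s') * V₂ s'|
        ≤ ∑ s' : S, |(p₁ m s' - p₂ m s') * V₂ s'| := Finset.abs_sum_le_sum_abs _ _
      _ ≤ ∑ s' : S, |p₁ m s' - p₂ m s'| * (R / (1 - γ)) := by
          refine Finset.sum_le_sum fun i _ => ?_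
          rw [abs_mul]
          exact mul_le_mul_of_nonneg_left (hV₂_bound i) (abs_nonneg _)
      _ ≤ β / R * (R / (1 - γ)) := by
          rw [← Finset.sum_mul]
          exact mul_le_mul_of_nonneg_right (hp m) (by positivity)
      _ = β / (1 - γ) := by field_simp
  have hE : V₁ m - V₂ m = (ρ₁ m - ρ₂ m) + γ * (∑ s' : S, p₁ m s' * (V₁ s' - V₂ s'))
      + γ * ∑ s' : S, (p₁ m s' - p₂ m s') * V₂ s' := by
    rw [hV₁ m, hV₂ m]
    simp only [mul_sub, sub_mul, Finset.sum_sub_distrib]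
    ring
  have hC : |V₁ m - V₂ m| ≤ β + γ * |V₁ m - V₂ m| + γ * (β / (1 - γ)) := by
    calc |V₁ m - V₂ m| = _ := congrArg _ hE
      _ ≤ _ := abs_add_three _ _ _
      _ ≤ _ := by
        rw [abs_mul, abs_mul, abs_of_nonneg hγ0]
        have := hρ m
        gcongr
  intro s
  refine (hm s).trans ?_
  rw [le_div_iff₀ h1, mul_div_assoc]
  linarith
end

section
/- Let S and A be finite nonempty types, γ ∈ [0, 1), and ε ≥ 0 real numbers, r : S → A → ℝ a reward function, and P : S → A → S → ℝ a stochastic kernel (P s a s' ≥ 0 and ∑_{s'} P s a s' = 1 for all s, a). Suppose Q* : S → A → ℝ satisfies the Bellman optimality equation Q*(s,a) = r s a + γ · ∑_{s'} P s a s' · max_{a'} Q*(s',a') for all s, a; suppose Q̂ : S → A → ℝ satisfies |Q̂(s,a) − Q*(s,a)| ≤ ε for all s, a; suppose π : S → A is greedy with respect to Q̂, i.e., Q̂(s, π s) = max_{a} Q̂(s,a) for all s; and suppose V^π : S → ℝ satisfies the policy-evaluation equation V^π(s) = r s (π s) + γ · ∑_{s'} P s (π s) s' · V^π(s') for all s.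 Then for every s ∈ S, V^π(s) ≥ max_{a} Q*(s,a) − 2ε / (1 − γ). -/
open Finset

/-- Greedy-policy suboptimality: acting greedily with respect to a uniformly
`ε`-accurate Q-table yields a `2ε/(1−γ)`-optimal policy. -/
theorem greedy_policy_suboptimality
    {S A : Type*} [Fintype S] [Fintype A] [Nonempty S] [Nonempty A]
    (γ ε : ℝ) (hγ0 : 0 ≤ γ) (hγ1 : γ < 1) (hε : 0 ≤ ε)
    (r : S → A → ℝ) (P : S → A → S → ℝ)
    (hP_nonneg : ∀ s a s', 0 ≤ P s a s')
    (hP_sum : ∀ s a, ∑ s' : S, P s a s' = 1)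
    (Qstar : S → A → ℝ)
    (hQstar : ∀ s a, Qstar s a =
      r s a + γ * ∑ s' : S, P s a s' *
        Finset.univ.sup' Finset.univ_nonempty (fun a' : A => Qstar s' a'))
    (Qhat : S → A → ℝ)
    (hQhat : ∀ s a, |Qhat s a - Qstar s a| ≤ ε)
    (π : S → A)
    (hπ : ∀ s, Qhat s (π s) =
      Finset.univ.sup' Finset.univ_nonempty (fun a : A => Qhat s a))
    (Vπ : S → ℝ)
    (hVπ : ∀ s, Vπ s = r s (π s) + γ * ∑ s' : S, P s (π s) s' * Vπ s') :
    ∀ s : S,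
      Vπ s ≥
        Finset.univ.sup' Finset.univ_nonempty (fun a : A => Qstar s a) -
          2 * ε / (1 - γ) := by
  set V : S → ℝ := fun s => Finset.univ.sup' Finset.univ_nonempty (fun a : A => Qstar s a) with hV
  have h1 : ∀ s, V s ≤ Qstar s (π s) + 2 * ε := by
    intro s
    refine Finset.sup'_le _ _ ?_
    intro a _
    have h := Finset.le_sup' (fun a : A => Qhat s a) (Finset.mem_univ a)
    rw [← hπ s] at h
    have h2 := abs_le.mp (hQhat s a)
    have h3 := abs_le.mp (hQhat s (π s))
    linarith [h2.1, h3.2]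
  obtain ⟨s0, hs0⟩ := Finite.exists_max (fun s => V s - Vπ s)
  have h2 : ∑ s' : S, P s0 (π s0) s' * (V s' - Vπ s') ≤ V s0 - Vπ s0 := by
    calc ∑ s' : S, P s0 (π s0) s' * (V s' - Vπ s')
        ≤ ∑ s' : S, P s0 (π s0) s' * (V s0 - Vπ s0) :=
          Finset.sum_le_sum fun s' _ => mul_le_mul_of_nonneg_left (hs0 s') (hP_nonneg _ _ _)
      _ = V s0 - Vπ s0 := by rw [← Finset.sum_mul, hP_sum, one_mul]
  have h3 := mul_le_mul_of_nonneg_left h2 hγ0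
  simp only [mul_sub, Finset.sum_sub_distrib] at h3
  have h4 : Qstar s0 (π s0) = r s0 (π s0) + γ * ∑ s' : S, P s0 (π s0) s' * V s' :=
    hQstar s0 (π s0)
  have h5 := hVπ s0
  have h6 := h1 s0
  have h7 : V s0 - Vπ s0 ≤ 2 * ε / (1 - γ) := by
    rw [le_div_iff₀ (by linarith)]
    linarith
  intro s
  have h8 := hs0 s
  change Vπ s ≥ V s - 2 * ε / (1 - γ)
  linarith
end

section
/- Let E and F be finite types, g : ℕ → E × F any function, and m₁, m₂, n natural numbers. Then the cardinality of the set { t ∈ Finset.range n : |{ t' ∈ Finset.range t : (g t').1 = (g t).1 }| < m₁ ∨ |{ t' ∈ Finset.range t : (g t').2 = (g t).2 }| < m₂ } is at most (Fintype.card E) · m₁ + (Fintype.card F) · m₂. -/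
theorem unknown_steps_aux {E : Type*} [Fintype E] [DecidableEq E] (f : ℕ → E) (m n : ℕ) :
    ((Finset.range n).filter
        (fun t => ((Finset.range t).filter (fun t' => f t' = f t)).card < m)).card ≤
      Fintype.card E * m := by
  have key : ∀ a b : ℕ, a < b → f a = f b →
      ((Finset.range a).filter (fun t' => f t' = f a)).card <
        ((Finset.range b).filter (fun t' => f t' = f b)).card := by
    intro a b hab hf
    apply Finset.card_lt_card
    rw [Finset.ssubset_iff_of_subset]
    · exact ⟨a, by simp [hab, hf], by simp⟩
    · intro x hx
      simp only [Finset.mem_filter, Finset.mem_range] at hx ⊢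
      exact ⟨hx.1.trans hab, hx.2.trans hf⟩
  have hc : ((Finset.univ : Finset E) ×ˢ Finset.range m).card = Fintype.card E * m := by
    simp [Finset.card_product]
  rw [← hc]
  apply Finset.card_le_card_of_injOn
    (fun t => (f t, ((Finset.range t).filter (fun t' => f t' = f t)).card))
  · intro t ht
    have ht' := (Finset.mem_filter.1 ht).2
    simpa using ht'
  · intro a _ b _ h
    have h1 := congrArg Prod.fst h
    have h2 := congrArg Prod.snd h
    dsimp only at h1 h2
    rcases lt_trichotomy a b with hab | hab | hab
    · exact absurd h2 (key a b hab h1).ne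
    · exact hab
    · exact absurd h2 (key b a hab h1.symm).ne'

/-- Two-family pigeonhole visit-counting (Theorem A.3): the number of time
steps at which either the environment component or the automaton component has
previously been visited fewer than its threshold number of times is at most
`|E|·m₁ + |F|·m₂`. -/
theorem unknown_steps_two_families_le
    {E F : Type*} [Fintype E] [Fintype F] [DecidableEq E] [DecidableEq F]
    (g : ℕ → E × F) (m₁ m₂ n : ℕ) :
    ((Finset.range n).filter
        (fun t =>
          ((Finset.range t).filter (fun t' => (g t').1 = (g t).1)).card < m₁ ∨
          ((Finset.range t).filter (fun t' => (g t').2 = (g t).2)).card < m₂)).card ≤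
      Fintype.card E * m₁ + Fintype.card F * m₂ := by
  rw [Finset.filter_or]
  exact (Finset.card_union_le _ _).trans (Nat.add_le_add
    (unknown_steps_aux (fun t => (g t).1) m₁ n) (unknown_steps_aux (fun t => (g t).2) m₂ n))
end
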